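/- The function B(H) = 8π·(1/(4H²−1) + (4H²/(4H²−1)^{3/2})·arctan(1/√(4H²−1))) is strictly decreasing on the interval (1/2, ∞); that is, for all H₁, H₂ with 1/2 < H₁ < H₂ one has B(H₂) < B(H₁). -/

import Mathlib

open Real Set

/-- Hsiang–Hsiang's formula for the area of the rotational CMC sphere of mean
curvature `H` in `H² × ℝ`. -/
noncomputable def hsiangArea (H : ℝ) : ℝ :=
  8 * Real.pi * (1 / (4 * H ^ 2 - 1) +
    (4 * H ^ 2 / (4 * H ^ 2 - 1) ^ ((3 : ℝ) / 2)) *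
      Real.arctan (1 / Real.sqrt (4 * H ^ 2 - 1)))

lemma hsiangArea_eq (H : ℝ) (h : 1 / 2 < H) :
    hsiangArea H = 8 * Real.pi * ((1 / Real.sqrt (4 * H ^ 2 - 1)) ^ 2 +
      (1 / Real.sqrt (4 * H ^ 2 - 1) + (1 / Real.sqrt (4 * H ^ 2 - 1)) ^ 3) *
        Real.arctan (1 / Real.sqrt (4 * H ^ 2 - 1))) := by
  have hx : 0 < 4 * H ^ 2 - 1 := by nlinarith
  have hs : 0 < Real.sqrt (4 * H ^ 2 - 1) := Real.sqrt_pos.mpr hx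
  have hsq : Real.sqrt (4 * H ^ 2 - 1) ^ 2 = 4 * H ^ 2 - 1 := Real.sq_sqrt hx.le
  have hp : (4 * H ^ 2 - 1) ^ ((3 : ℝ) / 2) = Real.sqrt (4 * H ^ 2 - 1) ^ 3 := by
    clear hsq hs
    generalize 4 * H ^ 2 - 1 = x at *
    rw [Real.sqrt_eq_rpow, ← Real.rpow_natCast, ← Real.rpow_mul hx.le]
    norm_num
  have h1 : 1 / (4 * H ^ 2 - 1) = (1 / Real.sqrt (4 * H ^ 2 - 1)) ^ 2 := by
    rw [div_pow, hsq, one_pow]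
  have h2 : 4 * H ^ 2 / Real.sqrt (4 * H ^ 2 - 1) ^ 3 =
      1 / Real.sqrt (4 * H ^ 2 - 1) + (1 / Real.sqrt (4 * H ^ 2 - 1)) ^ 3 := by
    have h4 : 4 * H ^ 2 = Real.sqrt (4 * H ^ 2 - 1) ^ 2 + 1 := by rw [hsq]; ring
    generalize Real.sqrt (4 * H ^ 2 - 1) = s at *
    rw [h4]
    field_simp
  unfold hsiangArea
  rw [hp, h1, h2]

/-- `B` is strictly decreasing on `(1/2, ∞)`. -/
theorem hsiangArea_strictAnti :
    ∀ H₁ H₂ : ℝ, 1 / 2 < H₁ → H₁ < H₂ → hsiangArea H₂ < hsiangArea H₁ := by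
  intro H₁ H₂ h1 h12
  rw [hsiangArea_eq H₁ h1, hsiangArea_eq H₂ (h1.trans h12)]
  have hx : 0 < 4 * H₁ ^ 2 - 1 := by nlinarith
  have hlt : 4 * H₁ ^ 2 - 1 < 4 * H₂ ^ 2 - 1 := by nlinarith
  have hs : 0 < Real.sqrt (4 * H₁ ^ 2 - 1) := Real.sqrt_pos.mpr hx
  have hss := Real.sqrt_lt_sqrt hx.le hlt
  have ht := one_div_lt_one_div_of_lt hs hss
  have ht0 : 0 < 1 / Real.sqrt (4 * H₂ ^ 2 - 1) := one_div_pos.mpr (hs.trans hss)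
  generalize 1 / Real.sqrt (4 * H₂ ^ 2 - 1) = a at *
  generalize 1 / Real.sqrt (4 * H₁ ^ 2 - 1) = b at *
  have ha : 0 < Real.arctan a := Real.arctan_pos.mpr ht0
  have hab : Real.arctan a < Real.arctan b := Real.arctan_strictMono ht
  have h2 : a ^ 2 < b ^ 2 := pow_lt_pow_left₀ ht ht0.le (by norm_num)
  have h3 : a ^ 3 < b ^ 3 := pow_lt_pow_left₀ ht ht0.le (by norm_num)
  have hm : (a + a ^ 3) * Real.arctan a < (b + b ^ 3) * Real.arctan b :=
    mul_lt_mul'' (by linarith) hab (by positivity) ha.le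
  exact mul_lt_mul_of_pos_left (by linarith) (by positivity)
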